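/- arXiv:1609.00284 — 5 statements merged into one kernel-verified Lean document; each statement's English description precedes it below -/
import Mathlib

section
/- Let G and G' be finite simple graphs, each with exactly n vertices, and let k satisfy 2 ≤ k ≤ n. If G and G' have the same k-deck, then G and G' have the same (k-1)-deck. -/
open SimpleGraph

/-- `SameDeck G G' k`: `G` and `G'` have the same `k`-deck, i.e. for every simple graph `H`
on `k` vertices, the number of `k`-element vertex subsets of `G` inducing a subgraph
isomorphic to `H` equals the corresponding number for `G'`. -/
def SameDeck {V W : Type*} [Fintype V] [Fintype W]
    (G : SimpleGraph V) (G' : SimpleGraph W) (k : ℕ) : Prop :=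
  ∀ H : SimpleGraph (Fin k),
    Set.ncard {s : Finset V | s.card = k ∧ Nonempty ((G.induce (↑s : Set V)) ≃g H)} =
    Set.ncard {s : Finset W | s.card = k ∧ Nonempty ((G'.induce (↑s : Set W)) ≃g H)}

/-- `copies G H = s(G,H)`, the number of vertex subsets of `G` whose induced subgraph is
isomorphic to `H`. -/
noncomputable def copies {V W : Type*} [Fintype V]
    (G : SimpleGraph V) (H : SimpleGraph W) : ℕ :=
  Set.ncard {s : Finset V | Nonempty ((G.induce (↑s : Set V)) ≃g H)}

/-- The connected component `c` of `G` is a path on `m` vertices. -/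
def CompIsPath {V : Type*} (G : SimpleGraph V) (c : G.ConnectedComponent) (m : ℕ) : Prop :=
  Nonempty ((G.induce c.supp) ≃g pathGraph m)

/-- The connected component `c` of `G` is a cycle on `m` vertices (`m ≥ 3`). -/
def CompIsCycle {V : Type*} (G : SimpleGraph V) (c : G.ConnectedComponent) (m : ℕ) : Prop :=
  3 ≤ m ∧ Nonempty ((G.induce c.supp) ≃g cycleGraph m)

/-- A linear forest: every connected component is a path. -/
def IsLinearForest {V : Type*} (G : SimpleGraph V) : Prop :=
  ∀ c : G.ConnectedComponent, ∃ m : ℕ, CompIsPath G c m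

/-! Kelly's double counting: every induced copy of a graph `H` on `m ≤ k` vertices lies in exactly
`(n - m).choose (k - m)` of the `k`-vertex induced subgraphs of a graph on `n` vertices. Since equal
`k`-decks match the `k`-vertex induced subgraphs of the two graphs up to isomorphism, they determine
the number of copies of `H`, as the binomial coefficient is nonzero for `k ≤ n`. -/

section Copies

open Finset

variable {V W U : Type*} {G : SimpleGraph V} {K : SimpleGraph W}

lemma nonempty_induce_iso_induce_map (f : K ↪g G) (t : Finset W) :
    Nonempty (K.induce (t : Set W) ≃g G.induce (t.map f.toEmbedding : Set V)) := by
  have hrange : Set.range (f.comp (Embedding.induce (t : Set W))) = t.map f.toEmbedding := by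
    rw [coe_map, Set.image_eq_range]
    rfl
  exact ⟨hrange ▸ (f.comp (Embedding.induce (t : Set W))).isoInduceRange⟩

lemma card_eq_of_induce_iso [Fintype U] {H : SimpleGraph U} {s : Finset V}
    (e : G.induce (s : Set V) ≃g H) : #s = Fintype.card U := by
  rw [← Fintype.card_coe]
  exact Fintype.card_congr e.toEquiv

lemma copies_eq_ncard_subset_range [Fintype W] (f : K ↪g G) (H : SimpleGraph U) :
    copies K H =
      {t : Finset V | (t : Set V) ⊆ Set.range f ∧ Nonempty (G.induce (t : Set V) ≃g H)}.ncard := by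
  have himage : {t : Finset V | (t : Set V) ⊆ Set.range f ∧ Nonempty (G.induce (t : Set V) ≃g H)} =
      Finset.map f.toEmbedding '' {t : Finset W | Nonempty (K.induce (t : Set W) ≃g H)} := by
    ext t
    constructor
    · rintro ⟨htf, ⟨g⟩⟩
      obtain ⟨u, -, rfl⟩ : ∃ u ⊆ univ, t = u.map f.toEmbedding :=
        subset_map_iff.mp fun v hv ↦ by simpa using htf hv
      obtain ⟨e⟩ := nonempty_induce_iso_induce_map f u
      exact ⟨u, ⟨e.trans g⟩, rfl⟩
    · rintro ⟨u, ⟨g⟩, rfl⟩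
      obtain ⟨e⟩ := nonempty_induce_iso_induce_map f u
      exact ⟨by simp, ⟨e.symm.trans g⟩⟩
  rw [himage, Set.ncard_image_of_injective _ (Finset.map_injective _), copies]

lemma copies_congr [Fintype V] [Fintype W] (e : K ≃g G) (H : SimpleGraph U) :
    copies K H = copies G H := by
  have hrange : Set.range e.toEmbedding = Set.univ := e.surjective.range_eq
  rw [copies_eq_ncard_subset_range e.toEmbedding H, hrange]
  simp only [Set.subset_univ, true_and, copies]

lemma copies_induce (G : SimpleGraph V) (s : Finset V) (H : SimpleGraph U) :
    copies (G.induce (s : Set V)) H =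
      {t : Finset V | t ⊆ s ∧ Nonempty (G.induce (t : Set V) ≃g H)}.ncard := by
  have hrange : Set.range (Embedding.induce (G := G) (s : Set V)) = s := Subtype.range_coe
  rw [copies_eq_ncard_subset_range (Embedding.induce (s : Set V)) H, hrange]
  simp only [coe_subset]

theorem sum_copies_induce [Fintype V] [Fintype U] (G : SimpleGraph V) (H : SimpleGraph U) {k : ℕ}
    (hk : Fintype.card U ≤ k) :
    ∑ s ∈ powersetCard k (univ : Finset V), copies (G.induce (s : Set V)) H =
      copies G H * (Fintype.card V - Fintype.card U).choose (k - Fintype.card U) := by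
  classical
  obtain ⟨copiesOfH, hmem⟩ : ∃ C : Finset (Finset V),
      ∀ t, t ∈ C ↔ Nonempty (G.induce (t : Set V) ≃g H) :=
    ⟨univ.filter fun t ↦ Nonempty (G.induce (t : Set V) ≃g H), fun t ↦ mem_filter_univ t⟩
  have hcopies : copies G H = #copiesOfH := by
    simp only [copies, ← hmem, setOfPred_mem, Set.ncard_coe_finset]
  have hcopies_induce (s : Finset V) :
      copies (G.induce (s : Set V)) H = #{t ∈ copiesOfH | t ⊆ s} := by
    simp only [copies_induce, ← hmem, ← Set.ncard_coe_finset, coe_filter, and_comm]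
  have hcard {t : Finset V} (ht : t ∈ copiesOfH) : #t = Fintype.card U :=
    card_eq_of_induce_iso ((hmem t).mp ht).some
  calc ∑ s ∈ powersetCard k (univ : Finset V), copies (G.induce (s : Set V)) H
      = ∑ s ∈ powersetCard k univ, #{t ∈ copiesOfH | t ⊆ s} :=
        sum_congr rfl fun s _ ↦ hcopies_induce s
    _ = ∑ t ∈ copiesOfH, #{s ∈ powersetCard k univ | t ⊆ s} := by
        simpa only [bipartiteAbove, bipartiteBelow] using
          sum_card_bipartiteAbove_eq_sum_card_bipartiteBelow
            (s := powersetCard k univ) (t := copiesOfH) (fun s t ↦ t ⊆ s)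
    _ = ∑ _ ∈ copiesOfH, (Fintype.card V - Fintype.card U).choose (k - Fintype.card U) :=
        sum_congr rfl fun t ht ↦ by
          rw [card_filter_powersetCard_subset t univ k (subset_univ t) ((hcard ht).trans_le hk),
            card_univ, hcard ht]
    _ = copies G H * (Fintype.card V - Fintype.card U).choose (k - Fintype.card U) := by
        rw [sum_const, smul_eq_mul, hcopies]

end Copies

section IsoClass

variable {U X : Type*} [Fintype U] [Fintype X] {k : ℕ}

/-- Isomorphism of graphs on a fixed vertex type. Its classes are the unlabelled graphs, which is
what the members of a deck are. -/
def graphIsoSetoid (V : Type*) : Setoid (SimpleGraph V) where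
  r G H := Nonempty (G ≃g H)
  iseqv := ⟨fun _ ↦ ⟨.refl⟩, fun ⟨e⟩ ↦ ⟨e.symm⟩, fun ⟨e⟩ ⟨f⟩ ↦ ⟨e.trans f⟩⟩

/-- The unlabelled graph underlying a graph with `k` vertices. The vertex set is transported to
`Fin k` so that graphs on different vertex types can be compared. -/
noncomputable def isoClass (K : SimpleGraph U) (hU : Fintype.card U = k) :
    Quotient (graphIsoSetoid (Fin k)) :=
  Quotient.mk _ (K.overFin hU)

lemma isoClass_eq_mk_iff (K : SimpleGraph U) (hU : Fintype.card U = k) (H : SimpleGraph (Fin k)) :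
    isoClass K hU = Quotient.mk _ H ↔ Nonempty (K ≃g H) :=
  Quotient.eq.trans
    ⟨fun ⟨e⟩ ↦ ⟨(K.overFinIso hU).trans e⟩, fun ⟨e⟩ ↦ ⟨(K.overFinIso hU).symm.trans e⟩⟩

lemma isoClass_eq_isoClass_iff (K : SimpleGraph U) (L : SimpleGraph X)
    (hU : Fintype.card U = k) (hX : Fintype.card X = k) :
    isoClass K hU = isoClass L hX ↔ Nonempty (K ≃g L) :=
  (isoClass_eq_mk_iff K hU _).trans
    ⟨fun ⟨e⟩ ↦ ⟨e.trans (L.overFinIso hX).symm⟩, fun ⟨e⟩ ↦ ⟨e.trans (L.overFinIso hX)⟩⟩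

end IsoClass

section Deck

open Finset

variable {V W : Type*} [Fintype V] [Fintype W] {G : SimpleGraph V} {G' : SimpleGraph W} {k : ℕ}

lemma copies_eq_ncard_card_eq (G : SimpleGraph V) (H : SimpleGraph (Fin k)) :
    copies G H =
      {s : Finset V | #s = k ∧ Nonempty (G.induce (s : Set V) ≃g H)}.ncard := by
  refine congrArg Set.ncard (Set.ext fun s ↦ (and_iff_right_of_imp ?_).symm)
  rintro ⟨e⟩
  simpa using card_eq_of_induce_iso e

lemma sameDeck_iff_copies_eq :
    SameDeck G G' k ↔ ∀ H : SimpleGraph (Fin k), copies G H = copies G' H := by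
  simp only [SameDeck, copies_eq_ncard_card_eq]

/-- The unlabelled graph induced by a `k`-element vertex set: a card of the `k`-deck of `G`. -/
noncomputable def inducedClass (G : SimpleGraph V) (s : {s : Finset V // #s = k}) :
    Quotient (graphIsoSetoid (Fin k)) :=
  isoClass (G.induce (s.1 : Set V)) ((Fintype.card_coe s.1).trans s.2)

lemma card_inducedClass_fiber (G : SimpleGraph V) (H : SimpleGraph (Fin k)) :
    Nat.card {s : {s : Finset V // #s = k} // inducedClass G s = Quotient.mk _ H} =
      copies G H := by
  rw [copies_eq_ncard_card_eq, ← Nat.card_coe_set_eq]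
  simp only [inducedClass, isoClass_eq_mk_iff]
  exact Nat.card_congr (Equiv.subtypeSubtypeEquivSubtypeInter _
    fun s : Finset V ↦ Nonempty (G.induce (s : Set V) ≃g H))

theorem SameDeck.exists_equiv_induce_iso (h : SameDeck G G' k) :
    ∃ e : {s : Finset V // #s = k} ≃ {s : Finset W // #s = k},
      ∀ s, Nonempty (G.induce (s.1 : Set V) ≃g G'.induce ((e s).1 : Set W)) := by
  have fiberEquiv (c : Quotient (graphIsoSetoid (Fin k))) :
      Nonempty ({s // inducedClass G s = c} ≃ {s // inducedClass G' s = c}) := by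
    induction c using Quotient.ind with | _ H =>
    refine Finite.card_eq.mp ?_
    rw [card_inducedClass_fiber, card_inducedClass_fiber, sameDeck_iff_copies_eq.mp h H]
  refine ⟨Equiv.ofFiberEquiv fun c ↦ (fiberEquiv c).some, fun s ↦ ?_⟩
  have hclass := Equiv.ofFiberEquiv_map (fun c ↦ (fiberEquiv c).some) s
  exact (isoClass_eq_isoClass_iff _ _ _ _).mp hclass.symm

lemma SameDeck.sum_copies_induce_eq {U : Type*} (h : SameDeck G G' k) (H : SimpleGraph U) :
    ∑ s ∈ powersetCard k (univ : Finset V), copies (G.induce (s : Set V)) H =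
      ∑ s ∈ powersetCard k (univ : Finset W), copies (G'.induce (s : Set W)) H := by
  obtain ⟨e, he⟩ := h.exists_equiv_induce_iso
  rw [sum_subtype _ (fun _ ↦ mem_powersetCard_univ), sum_subtype _ (fun _ ↦ mem_powersetCard_univ)]
  exact Fintype.sum_equiv e _ _ fun s ↦ copies_congr (he s).some H

theorem stmt_0_general {m : ℕ} (hcard : Fintype.card V = Fintype.card W) (hmk : m ≤ k)
    (hk : k ≤ Fintype.card V) (h : SameDeck G G' k) : SameDeck G G' m := by
  refine sameDeck_iff_copies_eq.mpr fun H ↦ ?_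
  have hm : Fintype.card (Fin m) ≤ k := by rwa [Fintype.card_fin]
  have hpos : 0 < (Fintype.card V - Fintype.card (Fin m)).choose (k - Fintype.card (Fin m)) :=
    Nat.choose_pos (Nat.sub_le_sub_right hk _)
  refine Nat.eq_of_mul_eq_mul_right hpos ?_
  rw [← sum_copies_induce G H hm, h.sum_copies_induce_eq H, sum_copies_induce G' H hm, hcard]

end Deck

/-- If two graphs with exactly `n` vertices have the same `k`-deck
(with `2 ≤ k ≤ n`), then they have the same `(k-1)`-deck. -/
theorem stmt_0 {V W : Type*} [Fintype V] [Fintype W]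
    (G : SimpleGraph V) (G' : SimpleGraph W) (n k : ℕ)
    (hV : Fintype.card V = n) (hW : Fintype.card W = n)
    (hk : 2 ≤ k) (hkn : k ≤ n)
    (h : SameDeck G G' k) :
    SameDeck G G' (k - 1) :=
  stmt_0_general (hV.trans hW.symm) (Nat.sub_le k 1) (hkn.trans_eq hV.symm) h
end

section
/- Let G and G' be finite simple graphs with maximum degree at most 2 having the same number of vertices and the same number of edges, and let k ∈ ℕ. If every connected component of each of G and G' is either a cycle with more than k vertices or a path with at least k-1 vertices, then G and G' have the same k-deck. -/
open SimpleGraph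

/-! The induced subgraphs of `G` on `k` vertices are counted by embeddings `H ↪g G`, and these are
determined by homomorphism counts from graphs on at most `k` vertices: a map `x : U → V` is an
embedding of `H` when `(ker x, G.comap x) = (⊥, H)`, the maps with `(r, H) ≤ (ker x, G.comap x)` are
the homomorphisms `H / r →g G`, and the two families of counts determine each other by Möbius
inversion. Homomorphism counts multiply over the components of `H`, and for connected `H` they add
over the components of `G`.

Let `H` be connected on at most `k` vertices with base vertex `u`. A homomorphism to a path or a
long cycle lifts to the two-way infinite path, so it consists of a height function `y : H →g ℤ` with
`y u = 0` and a position for `u`. In a cycle of length `m` every height function has `m` positions;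
in a path on `m` vertices it has `m - (max y - min y)` of them. With `A` the number of height
functions and `B` the sum of their spans, a cycle thus admits `m * A` homomorphisms and a path
`m * A - B`. In both cases this is `|V| * A - (|V| - |E|) * B`, which is additive over components. -/

section PosetCounting

theorem card_subtype_comp_eq_sum {A P : Type*} [Finite A] [Fintype P] (f : A → P)
    (Q : P → Prop) [DecidablePred Q] :
    Nat.card {a // Q (f a)} = ∑ q with Q q, Nat.card {a // f a = q} := by
  rw [← Nat.card_congr (Equiv.sigmaSubtypeFiberEquivSubtype f fun _ ↦ Iff.rfl),
    Nat.card_sigma]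
  exact (Finset.sum_subtype _ (by simp) fun q ↦ Nat.card {a // f a = q}).symm

theorem card_fiber_eq_of_card_le_eq {A B P : Type*} [Finite A] [Finite B] [PartialOrder P]
    [Finite P] {f : A → P} {g : B → P}
    (h : ∀ p, Nat.card {a // p ≤ f a} = Nat.card {b // p ≤ g b}) (p : P) :
    Nat.card {a // f a = p} = Nat.card {b // g b = p} := by
  classical
  have := Fintype.ofFinite P
  induction p using WellFoundedGT.induction with
  | ind p ih =>
    have hp : p ∈ Finset.univ.filter (p ≤ ·) := by simp
    have hsum := h p
    rw [card_subtype_comp_eq_sum f (p ≤ ·), card_subtype_comp_eq_sum g (p ≤ ·),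
      ← Finset.add_sum_erase _ _ hp, ← Finset.add_sum_erase _ _ hp] at hsum
    have above : ∑ q ∈ (Finset.univ.filter (p ≤ ·)).erase p, Nat.card {a // f a = q} =
        ∑ q ∈ (Finset.univ.filter (p ≤ ·)).erase p, Nat.card {b // g b = q} :=
      Finset.sum_congr rfl fun q hq ↦ ih q (by simp_all [lt_iff_le_and_ne, eq_comm])
    exact Nat.add_right_cancel (above ▸ hsum)

end PosetCounting

section InducedCopies

variable {U V : Type*} {H : SimpleGraph U} {G : SimpleGraph V}

theorem card_embedding_range_eq (s : Set V) :
    Nat.card {φ : H ↪g G // Set.range φ = s} = Nat.card (H ≃g G.induce s) := by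
  symm
  refine Nat.card_eq_of_bijective
    (fun e ↦ ⟨(Embedding.induce s).comp e.toEmbedding, ?_⟩) ⟨fun e e' h ↦ ?_, ?_⟩
  · ext v
    exact ⟨fun ⟨i, hi⟩ ↦ hi ▸ (e i).2, fun hv ↦ ⟨e.symm ⟨v, hv⟩, by simp⟩⟩
  · ext i
    exact DFunLike.congr_fun (congrArg Subtype.val h) i
  · rintro ⟨φ, rfl⟩
    exact ⟨φ.isoInduceRange, rfl⟩

theorem card_embedding_eq_copies_mul_card_aut [Finite U] [Fintype V] :
    Nat.card (H ↪g G) = copies G H * Nat.card (H ≃g H) := by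
  classical
  have card_fiber (s : Finset V) :
      Nat.card {φ : H ↪g G // (Set.range φ).toFinite.toFinset = s} =
        if Nonempty (G.induce (s : Set V) ≃g H) then Nat.card (H ≃g H) else 0 := by
    have : Nat.card {φ : H ↪g G // (Set.range φ).toFinite.toFinset = s} =
        Nat.card (H ≃g G.induce (s : Set V)) := by
      rw [← card_embedding_range_eq]
      exact Nat.card_congr (Equiv.subtypeEquivRight fun φ ↦ by simp [← Finset.coe_inj])
    rw [this]
    split_ifs with hs
    · obtain ⟨e⟩ := hs
      exact Nat.card_congr
        ⟨fun a ↦ a.trans e, fun a ↦ a.trans e.symm, fun a ↦ by ext; simp, fun a ↦ by ext; simp⟩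
    · exact Nat.card_eq_zero.2 (Or.inl ⟨fun a ↦ hs ⟨a.symm⟩⟩)
  have : Finite (H ↪g G) := DFunLike.finite _
  rw [← Nat.card_congr (Equiv.sigmaFiberEquiv fun φ : H ↪g G ↦ (Set.range φ).toFinite.toFinset),
    Nat.card_sigma, Finset.sum_congr rfl fun s _ ↦ card_fiber s, ← Finset.sum_filter,
    Finset.sum_const, smul_eq_mul, copies, Set.ncard_eq_toFinset_card', Set.toFinset_ofPred]

theorem ncard_card_eq_and_iso [Fintype V] {k : ℕ} (G : SimpleGraph V)
    (H : SimpleGraph (Fin k)) :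
    {s : Finset V | s.card = k ∧ Nonempty (G.induce (s : Set V) ≃g H)}.ncard = copies G H := by
  refine congrArg Set.ncard (Set.ext fun s ↦ and_iff_right_of_imp ?_)
  rintro ⟨e⟩
  simpa using Nat.card_congr e.toEquiv

theorem sameDeck_of_card_embedding_eq {W : Type*} [Fintype V] [Fintype W] {G : SimpleGraph V}
    {G' : SimpleGraph W} {k : ℕ}
    (h : ∀ H : SimpleGraph (Fin k), Nat.card (H ↪g G) = Nat.card (H ↪g G')) :
    SameDeck G G' k := by
  intro H
  have : Finite (H ≃g H) := DFunLike.finite _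
  have : Nonempty (H ≃g H) := ⟨RelIso.refl _⟩
  rw [ncard_card_eq_and_iso, ncard_card_eq_and_iso]
  apply Nat.eq_of_mul_eq_mul_right (Nat.card_pos (α := H ≃g H))
  rw [← card_embedding_eq_copies_mul_card_aut, ← card_embedding_eq_copies_mul_card_aut, h]

end InducedCopies

section HomCounts

universe u

variable {U : Type u} {V W : Type*}

theorem card_le_ker_and_le_comap_eq_card_hom (r : Setoid U) (H : SimpleGraph U)
    (G : SimpleGraph V) (hr : ∀ ⦃a b⦄, H.Adj a b → ¬ r a b) :
    Nat.card {x : U → V // r ≤ Setoid.ker x ∧ H ≤ G.comap x} =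
      Nat.card (H.map (Quotient.mk r) →g G) := by
  symm
  refine Nat.card_eq_of_bijective (fun φ ↦ ⟨φ ∘ Quotient.mk r, ?_, ?_⟩) ⟨fun φ φ' h ↦ ?_, ?_⟩
  · exact fun a b hab ↦ congrArg φ (Quotient.sound hab)
  · exact fun a b hab ↦ φ.map_adj (map_adj_apply' hab fun h ↦ hr hab (Quotient.exact h))
  · ext ⟨a⟩
    exact congrFun (congrArg Subtype.val h) a
  · rintro ⟨x, hker, hcomap⟩
    refine ⟨⟨Quotient.lift x fun a b hab ↦ hker hab, ?_⟩, rfl⟩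
    rintro _ _ ⟨-, a, b, hab, rfl, rfl⟩
    exact hcomap hab

theorem card_ker_comap_eq_card_embedding (H : SimpleGraph U) (G : SimpleGraph V) :
    Nat.card {x : U → V // (Setoid.ker x, G.comap x) = (⊥, H)} = Nat.card (H ↪g G) := by
  symm
  refine Nat.card_eq_of_bijective (fun φ ↦ ⟨φ, ?_⟩) ⟨fun φ φ' h ↦ ?_, ?_⟩
  · exact Prod.ext ((Setoid.injective_iff_ker_bot _).1 φ.injective) φ.comap_eq
  · exact DFunLike.coe_injective (congrArg Subtype.val h)
  · rintro ⟨x, hx⟩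
    obtain ⟨hker, rfl⟩ := Prod.ext_iff.1 hx
    exact ⟨Embedding.comap ⟨x, (Setoid.injective_iff_ker_bot x).2 hker⟩ G, rfl⟩

theorem isEmpty_le_ker_and_le_comap {r : Setoid U} {H : SimpleGraph U} {a b : U}
    (hab : H.Adj a b) (hr : r a b) (G : SimpleGraph V) :
    IsEmpty {x : U → V // r ≤ Setoid.ker x ∧ H ≤ G.comap x} :=
  ⟨fun ⟨_, hker, hcomap⟩ ↦ G.ne_of_adj (hcomap hab) (hker hr)⟩

theorem card_le_ker_and_le_comap_eq_of_card_hom_eq {G : SimpleGraph V} {G' : SimpleGraph W}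
    [Finite U] (h : ∀ {T : Type u} (K : SimpleGraph T), Finite T → Nat.card T ≤ Nat.card U →
      Nat.card (K →g G) = Nat.card (K →g G')) (r : Setoid U) (H : SimpleGraph U) :
    Nat.card {x : U → V // r ≤ Setoid.ker x ∧ H ≤ G.comap x} =
      Nat.card {x : U → W // r ≤ Setoid.ker x ∧ H ≤ G'.comap x} := by
  by_cases hr : ∀ ⦃a b⦄, H.Adj a b → ¬ r a b
  · rw [card_le_ker_and_le_comap_eq_card_hom r H G hr,
      card_le_ker_and_le_comap_eq_card_hom r H G' hr]
    exact h _ inferInstance (Nat.card_le_card_of_surjective _ Quotient.mk_surjective)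
  · push Not at hr
    obtain ⟨a, b, hab, hrab⟩ := hr
    have := isEmpty_le_ker_and_le_comap hab hrab G
    have := isEmpty_le_ker_and_le_comap hab hrab G'
    simp only [Nat.card_of_isEmpty]

theorem card_embedding_eq_of_card_hom_eq {G : SimpleGraph V} {G' : SimpleGraph W} [Finite U]
    [Finite V] [Finite W] (h : ∀ {T : Type u} (K : SimpleGraph T), Finite T →
      Nat.card T ≤ Nat.card U → Nat.card (K →g G) = Nat.card (K →g G')) (H : SimpleGraph U) :
    Nat.card (H ↪g G) = Nat.card (H ↪g G') := by
  have : Finite (Setoid U) :=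
    Finite.of_injective (fun r a b ↦ r a b) fun r r' h ↦ Setoid.ext fun a b ↦ by
      exact iff_of_eq (congrFun₂ h a b)
  rw [← card_ker_comap_eq_card_embedding, ← card_ker_comap_eq_card_embedding]
  exact card_fiber_eq_of_card_le_eq (fun p ↦ card_le_ker_and_le_comap_eq_of_card_hom_eq h p.1 p.2) _

end HomCounts

section Components

variable {U V : Type*} {H : SimpleGraph U}

theorem card_hom_eq_prod_connectedComponent [Fintype H.ConnectedComponent] (G : SimpleGraph V) :
    Nat.card (H →g G) = ∏ c : H.ConnectedComponent, Nat.card (c.toSimpleGraph →g G) := by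
  rw [← Nat.card_pi]
  refine Nat.card_congr
    ⟨fun f c ↦ f.comp c.toSimpleGraph_hom, H.homOfConnectedComponents, fun _ ↦ rfl, fun C ↦ ?_⟩
  ext c ⟨v, rfl⟩
  rfl

theorem apply_eq_of_preconnected {α : Type*} (hH : H.Preconnected) {f : U → α}
    (hf : ∀ ⦃a b⦄, H.Adj a b → f a = f b) (a b : U) : f a = f b := by
  induction (H.reachable_iff_reflTransGen a b).1 (hH a b) with
  | refl => rfl
  | tail _ hbc ih => exact ih.trans (hf hbc)

theorem card_hom_eq_sum_connectedComponent [Finite U] [Finite V] (hH : H.Connected)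
    (G : SimpleGraph V) [Fintype G.ConnectedComponent] :
    Nat.card (H →g G) = ∑ c : G.ConnectedComponent, Nat.card (H →g c.toSimpleGraph) := by
  obtain ⟨u⟩ := hH.nonempty
  have (c : G.ConnectedComponent) : Finite (H →g c.toSimpleGraph) := DFunLike.finite _
  rw [← Nat.card_sigma]
  symm
  refine Nat.card_eq_of_bijective (fun p ↦ p.1.toSimpleGraph_hom.comp p.2) ⟨?_, fun f ↦ ?_⟩
  · rintro ⟨c, f⟩ ⟨c', f'⟩ h
    have hval (i : U) : (f i : V) = f' i := DFunLike.congr_fun h i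
    obtain rfl : c = c' := (f u).2.symm.trans (hval u ▸ (f' u).2)
    obtain rfl : f = f' := by ext i; exact hval i
    rfl
  · have hf (i : U) : G.connectedComponentMk (f i) = G.connectedComponentMk (f u) :=
      apply_eq_of_preconnected hH.preconnected
        (f := fun i ↦ G.connectedComponentMk (f i))
        (fun a b hab ↦ ConnectedComponent.sound (f.map_adj hab).reachable) i u
    exact ⟨⟨G.connectedComponentMk (f u), fun i ↦ ⟨f i, hf i⟩, fun h ↦ f.map_adj h⟩, rfl⟩

theorem card_hom_top_fin_two [Finite V] (G : SimpleGraph V) :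
    Nat.card ((⊤ : SimpleGraph (Fin 2)) →g G) = 2 * G.edgeSet.ncard := by
  classical
  have := Fintype.ofFinite V
  rw [← coe_edgeFinset, Set.ncard_coe_finset, ← G.dart_card_eq_twice_card_edges,
    ← Nat.card_eq_fintype_card]
  refine Nat.card_eq_of_bijective
    (fun f ↦ (⟨(f 0, f 1), f.map_adj (by simp)⟩ : G.Dart)) ⟨fun f f' h ↦ ?_, fun d ↦ ?_⟩
  · have h' := congrArg Dart.toProd h
    ext i
    fin_cases i
    exacts [congrArg Prod.fst h', congrArg Prod.snd h']
  · refine ⟨⟨![d.fst, d.snd], fun {a b} hab ↦ ?_⟩, rfl⟩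
    fin_cases a <;> fin_cases b <;> simp_all [d.adj, d.adj.symm]

theorem ncard_edgeSet_eq_sum_connectedComponent [Finite V] (G : SimpleGraph V)
    [Fintype G.ConnectedComponent] :
    G.edgeSet.ncard = ∑ c : G.ConnectedComponent, c.toSimpleGraph.edgeSet.ncard := by
  have h := card_hom_eq_sum_connectedComponent (connected_top (V := Fin 2)) G
  simp only [card_hom_top_fin_two, ← Finset.mul_sum] at h
  exact Nat.eq_of_mul_eq_mul_left two_pos h

theorem ncard_edgeSet_congr {W : Type*} {G : SimpleGraph V} {G' : SimpleGraph W} (e : G ≃g G') :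
    G.edgeSet.ncard = G'.edgeSet.ncard :=
  Nat.card_congr e.mapEdgeSet

theorem card_eq_sum_connectedComponent [Finite V] (G : SimpleGraph V)
    [Fintype G.ConnectedComponent] :
    Nat.card V = ∑ c : G.ConnectedComponent, Nat.card c := by
  rw [← Nat.card_sigma]
  exact Nat.card_congr (Equiv.sigmaFiberEquiv G.connectedComponentMk).symm

end Components

section EdgeCounts

theorem ncard_edgeSet_pathGraph (m : ℕ) : (pathGraph (m + 1)).edgeSet.ncard = m := by
  have hrange : (pathGraph (m + 1)).edgeSet = Set.range fun i : Fin m ↦ s(i.castSucc, i.succ) := by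
    ext e
    induction e with
    | h a b =>
      simp only [mem_edgeSet, pathGraph_adj, Set.mem_range, Sym2.eq_iff, Fin.ext_iff,
        Fin.val_castSucc, Fin.val_succ]
      constructor
      · rintro (h | h)
        · exact ⟨⟨a, by omega⟩, Or.inl ⟨rfl, h⟩⟩
        · exact ⟨⟨b, by omega⟩, Or.inr ⟨rfl, h⟩⟩
      · omega
  rw [hrange, Set.ncard_range_of_injective, Nat.card_fin]
  intro i j h
  simp only [Sym2.eq_iff, Fin.ext_iff, Fin.val_castSucc, Fin.val_succ] at h
  omega

theorem ncard_edgeSet_cycleGraph {m : ℕ} (hm : 3 ≤ m) : (cycleGraph m).edgeSet.ncard = m := by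
  obtain ⟨n, rfl⟩ := Nat.exists_eq_add_of_le' hm
  have h := (cycleGraph (n + 3)).sum_degrees_eq_twice_card_edges
  simp only [cycleGraph_degree_three_le, Finset.sum_const, Finset.card_univ, Fintype.card_fin,
    smul_eq_mul] at h
  rw [← coe_edgeFinset, Set.ncard_coe_finset]
  omega

end EdgeCounts

section HeightFunctions

variable {U : Type*} {H : SimpleGraph U} {u : U}

theorem hasse_int_adj {a b : ℤ} : (hasse ℤ).Adj a b ↔ a + 1 = b ∨ b + 1 = a := by
  simp only [hasse_adj, Order.covBy_iff_add_one_eq]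

/-- The homomorphisms from `H` to the two-way infinite path `hasse ℤ` that send the base vertex `u`
to `0`. A homomorphism to a long path or cycle is such a function together with the image of `u`. -/
abbrev HeightFunction (H : SimpleGraph U) (u : U) : Type _ :=
  {y : H →g hasse ℤ // y u = 0}

/-- The sum, over all height functions `y` on `H`, of `max y - min y`, written as `|range y| - 1`
(the range is an interval when `H` is connected). -/
noncomputable def totalHeightSpan (H : SimpleGraph U) (u : U) : ℤ :=
  ∑ᶠ y : HeightFunction H u, ((Set.range y.1).ncard - 1 : ℤ)

/-- The translate `y + a` of a homomorphism `y` to the two-way infinite path. -/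
def translateHom (y : H →g hasse ℤ) (a : ℤ) : H →g hasse ℤ where
  toFun i := y i + a
  map_rel' h := by
    have := hasse_int_adj.1 (y.map_adj h)
    exact hasse_int_adj.2 (by omega)

@[simp]
theorem translateHom_apply (y : H →g hasse ℤ) (a : ℤ) (i : U) : translateHom y a i = y i + a :=
  rfl

/-- A homomorphism to the two-way infinite path is a height function together with the image of the
base vertex. -/
def homIntEquiv (H : SimpleGraph U) (u : U) : (H →g hasse ℤ) ≃ HeightFunction H u × ℤ where
  toFun z := (⟨translateHom z (-z u), by simp⟩, z u)
  invFun p := translateHom p.1.1 p.2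
  left_inv z := by ext i; simp
  right_inv p := by
    obtain ⟨⟨y, hy⟩, a⟩ := p
    ext <;> simp [hy]

theorem ordConnected_range_hom_int (hH : H.Preconnected) (y : H →g hasse ℤ) :
    (Set.range y).OrdConnected := by
  refine Set.ordConnected_iff.2 ?_
  rintro _ ⟨i, rfl⟩ _ ⟨j, rfl⟩ - t ⟨hit, htj⟩
  by_contra ht
  have hne (l : U) : y l ≠ t := fun h ↦ ht ⟨l, h⟩
  have below_iff : (y i < t) = (y j < t) :=
    apply_eq_of_preconnected hH (f := fun l ↦ y l < t) (fun a b hab ↦ by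
      have := hasse_int_adj.1 (y.map_adj hab)
      have := hne a
      have := hne b
      exact propext (by omega)) i j
  exact htj.not_gt (below_iff ▸ hit.lt_of_ne (hne i))

theorem exists_range_hom_int_eq_Icc [Finite U] (hH : H.Connected) (y : H →g hasse ℤ) :
    ∃ i j, y i ≤ y j ∧ Set.range y = Set.Icc (y i) (y j) := by
  have := hH.nonempty
  obtain ⟨i, hi⟩ := Finite.exists_min y
  obtain ⟨j, hj⟩ := Finite.exists_max y
  refine ⟨i, j, hi j, Set.Subset.antisymm ?_ ?_⟩
  · rintro _ ⟨l, rfl⟩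
    exact ⟨hi l, hj l⟩
  · exact (ordConnected_range_hom_int hH.preconnected y).out ⟨i, rfl⟩ ⟨j, rfl⟩

end HeightFunctions

section Cycles

variable {U : Type*} {H : SimpleGraph U} {m : ℕ}

/-- The cycle on `ZMod m`, in which the residues differing by `1` are adjacent. -/
abbrev zmodCycle (m : ℕ) : SimpleGraph (ZMod m) :=
  circulantGraph {1}

theorem nonempty_iso_zmodCycle (hm : m ≠ 0) : Nonempty (cycleGraph m ≃g zmodCycle m) := by
  obtain ⟨n, rfl⟩ := Nat.exists_eq_succ_of_ne_zero hm
  rw [Nat.succ_eq_add_one, cycleGraph_eq_circulantGraph]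
  exact ⟨RelIso.refl _⟩

theorem zmodCycle_adj (hm : 1 < m) {a b : ZMod m} :
    (zmodCycle m).Adj a b ↔ a + 1 = b ∨ b + 1 = a := by
  have : Fact (1 < m) := ⟨hm⟩
  have := one_ne_zero (α := ZMod m)
  simp only [circulantGraph_adj, Set.mem_singleton_iff]
  grind

/-- Reduction modulo `m`, translated by `a`, wraps the two-way infinite path around the cycle. -/
def wrapHom (hm : 1 < m) (a : ZMod m) : hasse ℤ →g zmodCycle m where
  toFun z := z + a
  map_rel' {z w} h := (zmodCycle_adj hm).2 <| by
    rcases hasse_int_adj.1 h with rfl | rfl <;> push_cast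
    · exact Or.inl (by ring)
    · exact Or.inr (by ring)

theorem hom_int_eq_of_cast_eq (hH : H.Preconnected) (hm : 3 ≤ m) {y y' : H →g hasse ℤ}
    (hcast : ∀ i, (y i : ZMod m) = y' i) {u : U} (hu : y u = y' u) : y = y' := by
  ext i
  have diff_adj ⦃a b : U⦄ (hab : H.Adj a b) : y' a - y a = y' b - y b := by
    obtain ⟨p, hp⟩ := (ZMod.intCast_eq_intCast_iff_dvd_sub _ _ m).1 (hcast a)
    obtain ⟨q, hq⟩ := (ZMod.intCast_eq_intCast_iff_dvd_sub _ _ m).1 (hcast b)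
    have hy := hasse_int_adj.1 (y.map_adj hab)
    have hy' := hasse_int_adj.1 (y'.map_adj hab)
    have hdvd : (m : ℤ) ∣ (y' a - y a) - (y' b - y b) := ⟨p - q, by rw [hp, hq]; ring⟩
    exact sub_eq_zero.1 (Int.eq_zero_of_abs_lt_dvd hdvd (abs_lt.2 (by omega)))
  have := apply_eq_of_preconnected hH (f := fun i ↦ y' i - y i) diff_adj i u
  grind

theorem exists_lift_of_not_surjective (hm : 1 < m) (x : H →g zmodCycle m)
    (hx : ¬ Function.Surjective x) : ∃ z : H →g hasse ℤ, ∀ i, (z i : ZMod m) = x i := by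
  have : Fact (1 < m) := ⟨hm⟩
  have : NeZero m := ⟨by omega⟩
  obtain ⟨t, ht⟩ := not_forall.1 hx
  have val_add_one {a b : U} (h : x a + 1 = x b) : (x a - t).val + 1 = (x b - t).val := by
    have hb : x b - t ≠ 0 := fun h0 ↦ ht ⟨b, sub_eq_zero.1 h0⟩
    have hb' : 1 ≤ (x b - t).val := Nat.one_le_iff_ne_zero.2 ((ZMod.val_ne_zero _).2 hb)
    have ha : x a - t = x b - t - 1 := by rw [← h]; ring
    rw [ha, ZMod.val_sub (by rwa [ZMod.val_one]), ZMod.val_one]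
    omega
  refine ⟨⟨fun i ↦ (x i - t).val + t.val, fun {a b} hab ↦ hasse_int_adj.2 ?_⟩, fun i ↦ ?_⟩
  · rcases (zmodCycle_adj hm).1 (x.map_adj hab) with h | h
    · have := val_add_one h
      omega
    · have := val_add_one h
      omega
  · change (((x i - t).val + t.val : ℤ) : ZMod m) = x i
    simp

theorem wrapHom_comp_injective (hH : H.Preconnected) (hm : 3 ≤ m) (u : U) :
    Function.Injective fun p : ZMod m × HeightFunction H u ↦
      (wrapHom (by omega) p.1).comp p.2.1 := by
  rintro ⟨a, y, hy⟩ ⟨a', y', hy'⟩ h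
  have hval (i : U) : (y i + a : ZMod m) = y' i + a' := DFunLike.congr_fun h i
  obtain rfl : a = a' := by simpa [hy, hy'] using hval u
  obtain rfl : y = y' :=
    hom_int_eq_of_cast_eq hH hm (fun i ↦ add_right_cancel (hval i)) (hy.trans hy'.symm)
  rfl

theorem finite_heightFunction [Finite U] (hH : H.Preconnected) (u : U) :
    Finite (HeightFunction H u) := by
  have : Finite (H →g zmodCycle 3) := DFunLike.finite _
  exact Finite.of_injective _
    ((wrapHom_comp_injective hH le_rfl u).comp (Prod.mk_right_injective 0))

theorem wrapHom_comp_surjective [Finite U] (hm : 1 < m) (hU : Nat.card U < m) (u : U) :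
    Function.Surjective fun p : ZMod m × HeightFunction H u ↦ (wrapHom hm p.1).comp p.2.1 := by
  intro x
  have hx : ¬ Function.Surjective x := fun hx ↦ by
    have : NeZero m := ⟨by omega⟩
    have := Nat.card_le_card_of_surjective _ hx
    rw [Nat.card_zmod] at this
    omega
  obtain ⟨z, hz⟩ := exists_lift_of_not_surjective hm x hx
  refine ⟨(x u, (homIntEquiv H u z).1), ?_⟩
  ext i
  change ((z i + -z u : ℤ) : ZMod m) + x u = x i
  push_cast
  rw [hz, hz]
  ring

theorem card_hom_cycleGraph [Finite U] (hH : H.Preconnected) (hm : 3 ≤ m) (hU : Nat.card U < m)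
    (u : U) : Nat.card (H →g cycleGraph m) = m * Nat.card (HeightFunction H u) := by
  obtain ⟨e⟩ := nonempty_iso_zmodCycle (m := m) (by omega)
  rw [Nat.card_congr (Iso.homCongr (RelIso.refl _) e),
    ← Nat.card_eq_of_bijective _ ⟨wrapHom_comp_injective hH hm u, wrapHom_comp_surjective _ hU u⟩,
    Nat.card_prod, Nat.card_zmod]

end Cycles

section Paths

variable {U : Type*} {H : SimpleGraph U}

/-- A homomorphism to the path on `m` vertices is a homomorphism to the two-way infinite path with
values in the window `[0, m)`. -/
def homPathGraphEquiv (H : SimpleGraph U) (m : ℕ) :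
    (H →g pathGraph m) ≃ {z : H →g hasse ℤ // ∀ i, z i ∈ Set.Ico 0 (m : ℤ)} where
  toFun x := ⟨⟨fun i ↦ (x i : ℕ), fun h ↦ by
    have := pathGraph_adj.1 (x.map_adj h)
    exact hasse_int_adj.2 (by omega)⟩, fun i ↦ by simp⟩
  invFun z := ⟨fun i ↦ ⟨(z.1 i).toNat, by have := z.2 i; grind⟩, fun {a b} h ↦ by
    have := hasse_int_adj.1 (z.1.map_adj h)
    have := z.2 a
    have := z.2 b
    exact pathGraph_adj.2 (by grind)⟩
  left_inv x := by ext i; simp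
  right_inv z := by ext i; simpa using (z.2 i).1

theorem card_translates_into_Ico [Finite U] (hH : H.Connected) (y : H →g hasse ℤ) {m : ℕ}
    (hm : Nat.card U ≤ m + 1) :
    (Nat.card {a : ℤ // ∀ i, y i + a ∈ Set.Ico 0 (m : ℤ)} : ℤ) =
      m + 1 - (Set.range y).ncard := by
  obtain ⟨i, j, hij, hrange⟩ := exists_range_hom_int_eq_Icc hH y
  have translates : {a : ℤ | ∀ i, y i + a ∈ Set.Ico 0 (m : ℤ)} = Set.Ico (-y i) (m - y j) := by
    ext a
    have hy (l : U) : y l ∈ Set.Icc (y i) (y j) := hrange ▸ ⟨l, rfl⟩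
    refine ⟨fun h ↦ ?_, fun h l ↦ ?_⟩
    · have := h i
      have := h j
      grind
    · have := hy l
      grind
  have ncard_range : ((Set.range y).ncard : ℤ) = y j + 1 - y i := by
    rw [hrange, ← Finset.coe_Icc, Set.ncard_coe_finset, Int.card_Icc]
    omega
  have ncard_range_le : (Set.range y).ncard ≤ Nat.card U := by
    rw [← Set.image_univ, ← Set.ncard_univ]
    exact Set.ncard_image_le
  change (({a : ℤ | ∀ i, y i + a ∈ Set.Ico 0 (m : ℤ)}.ncard : ℕ) : ℤ) = _
  rw [translates, ← Finset.coe_Ico, Set.ncard_coe_finset, Int.card_Ico]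
  omega

theorem card_hom_pathGraph [Finite U] (hH : H.Connected) {m : ℕ} (hm : Nat.card U ≤ m + 1)
    (u : U) : (Nat.card (H →g pathGraph m) : ℤ) =
      m * Nat.card (HeightFunction H u) - totalHeightSpan H u := by
  have := finite_heightFunction hH.preconnected u
  have := Fintype.ofFinite (HeightFunction H u)
  have finite_translates (y : HeightFunction H u) :
      Finite {a : ℤ // ∀ i, y.1 i + a ∈ Set.Ico 0 (m : ℤ)} :=
    (Set.finite_Ico 0 (m : ℤ)).subset fun a ha ↦ by simpa [y.2] using ha u
  have homEquivSigma : (H →g pathGraph m) ≃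
      Σ y : HeightFunction H u, {a : ℤ // ∀ i, y.1 i + a ∈ Set.Ico 0 (m : ℤ)} :=
    (homPathGraphEquiv H m).trans <|
      ((homIntEquiv H u).subtypeEquiv (q := fun p ↦ ∀ i, p.1.1 i + p.2 ∈ Set.Ico 0 (m : ℤ))
        fun z ↦ by simp [homIntEquiv]).trans <|
      Equiv.subtypeProdEquivSigmaSubtype fun (y : HeightFunction H u) a ↦
        ∀ i, y.1 i + a ∈ Set.Ico 0 (m : ℤ)
  rw [Nat.card_congr homEquivSigma, Nat.card_sigma, totalHeightSpan, finsum_eq_sum_of_fintype]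
  push_cast
  simp only [fun y : HeightFunction H u ↦ card_translates_into_Ico hH y.1 hm,
    Finset.sum_sub_distrib, Finset.sum_const, Finset.card_univ, Nat.card_eq_fintype_card,
    nsmul_eq_mul]
  ring

end Paths

section LongComponents

variable {U V W : Type*} {H : SimpleGraph U} {u : U} {G : SimpleGraph V} {G' : SimpleGraph W}
  {k m : ℕ}

/-- The number of homomorphisms `H →g G`, for `H` connected with base vertex `u`, when the
components of `G` are long paths and cycles. Then `|V| - |E|` is the number of path components. -/
noncomputable def eulerHomCount (H : SimpleGraph U) (u : U) (G : SimpleGraph V) : ℤ :=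
  Nat.card V * Nat.card (HeightFunction H u) -
    (Nat.card V - G.edgeSet.ncard) * totalHeightSpan H u

/-- Every component of `G` is a cycle with more than `k` vertices or a path with at least `k - 1`
vertices. -/
def HasLongComponents (G : SimpleGraph V) (k : ℕ) : Prop :=
  ∀ c : G.ConnectedComponent,
    (∃ m, k < m ∧ CompIsCycle G c m) ∨ (∃ m, k - 1 ≤ m ∧ CompIsPath G c m)

theorem eulerHomCount_eq_sum_connectedComponent [Finite V] [Fintype G.ConnectedComponent] :
    eulerHomCount H u G = ∑ c : G.ConnectedComponent, eulerHomCount H u c.toSimpleGraph := by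
  simp only [eulerHomCount]
  rw [ncard_edgeSet_eq_sum_connectedComponent, card_eq_sum_connectedComponent G]
  push_cast
  rw [Finset.sum_sub_distrib, ← Finset.sum_mul, ← Finset.sum_mul, Finset.sum_sub_distrib]

theorem card_hom_eq_eulerHomCount_of_iso_cycleGraph [Finite U] (hH : H.Preconnected) (hm : 3 ≤ m)
    (hU : Nat.card U < m) (e : G ≃g cycleGraph m) (u : U) :
    (Nat.card (H →g G) : ℤ) = eulerHomCount H u G := by
  rw [Nat.card_congr (Iso.homCongr (RelIso.refl _) e), card_hom_cycleGraph hH hm hU u,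
    eulerHomCount, ncard_edgeSet_congr e, ncard_edgeSet_cycleGraph hm, Nat.card_congr e.toEquiv,
    Nat.card_fin]
  push_cast
  ring

theorem card_hom_eq_eulerHomCount_of_iso_pathGraph [Finite U] [Nonempty V] (hH : H.Connected)
    (hU : Nat.card U ≤ m + 1) (e : G ≃g pathGraph m) (u : U) :
    (Nat.card (H →g G) : ℤ) = eulerHomCount H u G := by
  obtain ⟨v⟩ := ‹Nonempty V›
  obtain ⟨n, rfl⟩ := Nat.exists_eq_add_of_le' (Fin.pos (e v))
  rw [Nat.card_congr (Iso.homCongr (RelIso.refl _) e), card_hom_pathGraph hH hU u,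
    eulerHomCount, ncard_edgeSet_congr e, ncard_edgeSet_pathGraph, Nat.card_congr e.toEquiv,
    Nat.card_fin]
  push_cast
  ring

theorem HasLongComponents.card_hom_eq_eulerHomCount [Finite U] [Finite V]
    (hG : HasLongComponents G k) (hH : H.Connected) (hU : Nat.card U ≤ k) (u : U) :
    (Nat.card (H →g G) : ℤ) = eulerHomCount H u G := by
  have := Fintype.ofFinite G.ConnectedComponent
  rw [card_hom_eq_sum_connectedComponent hH, eulerHomCount_eq_sum_connectedComponent, Nat.cast_sum]
  refine Finset.sum_congr rfl fun c _ ↦ ?_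
  have : Nonempty c := c.nonempty_supp.to_subtype
  rcases hG c with ⟨m, hkm, hm, ⟨e⟩⟩ | ⟨m, hkm, ⟨e⟩⟩
  · exact card_hom_eq_eulerHomCount_of_iso_cycleGraph hH.preconnected hm (by omega) e u
  · exact card_hom_eq_eulerHomCount_of_iso_pathGraph hH (by omega) e u

theorem HasLongComponents.card_hom_eq [Finite U] [Finite V] [Finite W]
    (hG : HasLongComponents G k) (hG' : HasLongComponents G' k) (hcard : Nat.card V = Nat.card W)
    (hedges : G.edgeSet.ncard = G'.edgeSet.ncard) (H : SimpleGraph U) (hU : Nat.card U ≤ k) :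
    Nat.card (H →g G) = Nat.card (H →g G') := by
  have := Fintype.ofFinite H.ConnectedComponent
  rw [card_hom_eq_prod_connectedComponent, card_hom_eq_prod_connectedComponent]
  refine Finset.prod_congr rfl fun c _ ↦ ?_
  obtain ⟨u⟩ := c.nonempty_supp.to_subtype
  have hc : Nat.card c ≤ k := (Finite.card_subtype_le _).trans hU
  have hconn := c.connected_toSimpleGraph
  have eulerHomCount_eq :
      eulerHomCount c.toSimpleGraph u G = eulerHomCount c.toSimpleGraph u G' := by
    simp only [eulerHomCount, hcard, hedges]
  rw [← Nat.cast_inj (R := ℤ), hG.card_hom_eq_eulerHomCount hconn hc u,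
    hG'.card_hom_eq_eulerHomCount hconn hc u, eulerHomCount_eq]

end LongComponents

/-- Graphs with maximum degree at most 2, the same number of vertices and the
same number of edges, all of whose components are cycles with more than `k` vertices or
paths with at least `k-1` vertices, have the same `k`-deck. -/
theorem stmt_1 {V W : Type*} [Fintype V] [Fintype W]
    (G : SimpleGraph V) (G' : SimpleGraph W) (k : ℕ)
    (hdegG : ∀ v, (G.neighborSet v).ncard ≤ 2)
    (hdegG' : ∀ w, (G'.neighborSet w).ncard ≤ 2)
    (hcard : Fintype.card V = Fintype.card W)
    (hedges : G.edgeSet.ncard = G'.edgeSet.ncard)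
    (hG : ∀ c : G.ConnectedComponent,
      (∃ m, k < m ∧ CompIsCycle G c m) ∨ (∃ m, k - 1 ≤ m ∧ CompIsPath G c m))
    (hG' : ∀ c : G'.ConnectedComponent,
      (∃ m, k < m ∧ CompIsCycle G' c m) ∨ (∃ m, k - 1 ≤ m ∧ CompIsPath G' c m)) :
    SameDeck G G' k := by
  have hcard' : Nat.card V = Nat.card W := by simpa only [Nat.card_eq_fintype_card] using hcard
  refine sameDeck_of_card_embedding_eq (card_embedding_eq_of_card_hom_eq fun K _ hK ↦ ?_)
  exact HasLongComponents.card_hom_eq hG hG' hcard' hedges K (by simpa using hK)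
end

section
/- Let k, q, r be natural numbers with q ≥ k+1, r ≥ k+1, q ≥ 3, and r ≥ 3. Then the cycle C_{q+r} and the disjoint union C_q + C_r have the same k-deck. -/
open SimpleGraph

/-!
Write the vertices of `C_q + C_r` and of `C_{q+r}` as a block of length `q` followed by a block of
length `r`. A set of at most `k` vertices misses some offset `j ≤ k` in both blocks. Exchanging the
first `j` vertices of the two blocks turns one graph into the other away from the offset `j`: inside
the blocks it breaks only edges at the offset `j`, and it redirects the edges between last and first
vertices of blocks, which are the ones on which the two graphs differ. It also preserves offsets, so
if `j` is chosen as a function of the set of occupied offsets, then the resulting map on `k`-subsets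
is a bijection.
-/

open Finset

section Deck

variable {V W α : Type*} {G : SimpleGraph V} {G' : SimpleGraph W} {k : ℕ}

theorem SameDeck.symm [Fintype V] [Fintype W] (h : SameDeck G G' k) : SameDeck G' G k :=
  fun H => (h H).symm

theorem nonempty_induce_iso_induce_map_s2 {s : Finset V} (e : V ≃ W)
    (he : ∀ u ∈ s, ∀ v ∈ s, G'.Adj (e u) (e v) ↔ G.Adj u v) :
    Nonempty (G.induce (s : Set V) ≃g G'.induce (s.map e.toEmbedding : Set W)) :=
  ⟨⟨e.subtypeEquiv (by simp), fun {u v} => he u u.2 v v.2⟩⟩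

theorem sameDeck_of_forall_exists_equiv [Fintype V] [Fintype W] (p : V → α) (p' : W → α)
    (h : ∀ A : Finset α, #A ≤ k → ∃ e : V ≃ W, (∀ v, p' (e v) = p v) ∧
      ∀ u v, p u ∈ A → p v ∈ A → (G'.Adj (e u) (e v) ↔ G.Adj u v)) :
    SameDeck G G' k := by
  classical
  intro H
  have : Nonempty (V ≃ W) := (h ∅ (by simp)).nonempty
  choose! e he hadj using h
  have card_image {s : Finset V} (hs : #s = k) : #(s.image p) ≤ k := card_image_le.trans hs.le
  have image_map {s : Finset V} (hs : #s = k) :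
      (s.map (e (s.image p)).toEmbedding).image p' = s.image p := by
    rw [map_eq_image, image_image]
    exact image_congr fun v _ => he _ (card_image hs) v
  have iso {s : Finset V} (hs : #s = k) :
      Nonempty (G.induce (s : Set V) ≃g
        G'.induce (s.map (e (s.image p)).toEmbedding : Set W)) :=
    nonempty_induce_iso_induce_map_s2 _ fun u hu v hv =>
      hadj _ (card_image hs) u v (mem_image_of_mem p hu) (mem_image_of_mem p hv)
  refine Set.ncard_congr (fun s _ => s.map (e (s.image p)).toEmbedding) ?_ ?_ ?_
  · rintro s ⟨hs, ⟨f⟩⟩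
    obtain ⟨g⟩ := iso hs
    exact ⟨by rw [card_map, hs], ⟨g.symm.trans f⟩⟩
  · rintro s t ⟨hs, -⟩ ⟨ht, -⟩ hst
    have himage : s.image p = t.image p := by rw [← image_map hs, hst, image_map ht]
    rw [himage] at hst
    exact map_injective _ hst
  · rintro t ⟨ht, ⟨f⟩⟩
    have hA : #(t.image p') ≤ k := card_image_le.trans ht.le
    let s := t.map (e (t.image p')).symm.toEmbedding
    have hs : #s = k := by rw [card_map, ht]
    have himage : s.image p = t.image p' := by
      simp only [s, map_eq_image, image_image]
      exact image_congr fun w _ => by simp [← he _ hA]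
    have hst : s.map (e (s.image p)).toEmbedding = t := by
      rw [himage]; ext; simp [s]
    obtain ⟨g⟩ := iso hs
    rw [hst] at g
    exact ⟨s, ⟨hs, ⟨g.trans f⟩⟩, hst⟩

end Deck

theorem cycleGraph_adj_iff_val {n : ℕ} (hn : 2 ≤ n) (u v : Fin n) :
    (cycleGraph n).Adj u v ↔
      (u : ℕ) + 1 = v ∨ (v : ℕ) + 1 = u ∨ ((u : ℕ) = 0 ∧ (v : ℕ) + 1 = n) ∨
        ((v : ℕ) = 0 ∧ (u : ℕ) + 1 = n) := by
  have val_sub_eq_one (a b : Fin n) :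
      ((a - b : Fin n) : ℕ) = 1 ↔ (b : ℕ) + 1 = a ∨ ((a : ℕ) = 0 ∧ (b : ℕ) + 1 = n) := by
    rcases le_or_gt b a with h | h
    · rw [Fin.sub_val_of_le h]; omega
    · rw [Fin.coe_sub_iff_lt.mpr h]; omega
  rw [cycleGraph_adj', val_sub_eq_one, val_sub_eq_one]
  omega

section TwoBlocks

variable {q r : ℕ}

/-- The position of a vertex inside its block, for two blocks of lengths `q` and `r`. -/
def blockOffset : Fin q ⊕ Fin r → ℕ :=
  Sum.elim Fin.val Fin.val

/-- The involution exchanging the first `j` vertices of two blocks of lengths `q` and `r`. When `j`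
exceeds one of the lengths, only the vertices that have a counterpart are exchanged. -/
def swapPrefixes (q r j : ℕ) : Equiv.Perm (Fin q ⊕ Fin r) :=
  Function.Involutive.toPerm
    (Sum.elim
      (fun i => if h : i < j ∧ i < r then .inr ⟨i, h.2⟩ else .inl i)
      (fun i => if h : i < j ∧ i < q then .inl ⟨i, h.2⟩ else .inr i))
    (by rintro (i | i) <;> simp only [Sum.elim_inl, Sum.elim_inr] <;> split_ifs with h <;> grind)

theorem swapPrefixes_inl (j : ℕ) (i : Fin q) :
    swapPrefixes q r j (.inl i) = if h : i < j ∧ i < r then .inr ⟨i, h.2⟩ else .inl i :=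
  rfl

theorem swapPrefixes_inr (j : ℕ) (i : Fin r) :
    swapPrefixes q r j (.inr i) = if h : i < j ∧ i < q then .inl ⟨i, h.2⟩ else .inr i :=
  rfl

theorem blockOffset_swapPrefixes (j : ℕ) (x : Fin q ⊕ Fin r) :
    blockOffset (swapPrefixes q r j x) = blockOffset x := by
  rcases x with i | i
  · rw [swapPrefixes_inl]; split_ifs <;> rfl
  · rw [swapPrefixes_inr]; split_ifs <;> rfl

theorem val_finSumFinEquiv_swapPrefixes_inl {j : ℕ} (hj : j ≤ r) (i : Fin q) :
    (finSumFinEquiv (swapPrefixes q r j (.inl i)) : ℕ) =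
      if (i : ℕ) < j then q + (i : ℕ) else (i : ℕ) := by
  rw [swapPrefixes_inl]
  split_ifs <;> first | omega | simp

theorem val_finSumFinEquiv_swapPrefixes_inr {j : ℕ} (hj : j ≤ q) (i : Fin r) :
    (finSumFinEquiv (swapPrefixes q r j (.inr i)) : ℕ) =
      if (i : ℕ) < j then (i : ℕ) else q + (i : ℕ) := by
  rw [swapPrefixes_inr]
  split_ifs <;> first | omega | simp

theorem cycleGraph_adj_swapPrefixes_iff (hq : 2 ≤ q) (hr : 2 ≤ r) {j : ℕ} (hjq : j < q)
    (hjr : j < r) {x y : Fin q ⊕ Fin r} (hx : blockOffset x ≠ j) (hy : blockOffset y ≠ j) :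
    (cycleGraph (q + r)).Adj (finSumFinEquiv (swapPrefixes q r j x))
        (finSumFinEquiv (swapPrefixes q r j y)) ↔
      (cycleGraph q ⊕g cycleGraph r).Adj x y := by
  rw [cycleGraph_adj_iff_val (by omega)]
  rcases x with x | x <;> rcases y with y | y <;>
    simp only [blockOffset, Sum.elim_inl, Sum.elim_inr] at hx hy <;>
    simp only [sum_adj, iff_false, cycleGraph_adj_iff_val hq, cycleGraph_adj_iff_val hr,
      val_finSumFinEquiv_swapPrefixes_inl hjr.le, val_finSumFinEquiv_swapPrefixes_inr hjq.le] <;>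
    split_ifs <;> omega

end TwoBlocks

/-- If `q, r ≥ k+1` and `q, r ≥ 3`, then `C_{q+r}` and `C_q + C_r` have the
same `k`-deck. -/
theorem stmt_2 (k q r : ℕ) (hq : k + 1 ≤ q) (hr : k + 1 ≤ r) (hq3 : 3 ≤ q) (hr3 : 3 ≤ r) :
    SameDeck (cycleGraph (q + r)) (cycleGraph q ⊕g cycleGraph r) k := by
  refine (sameDeck_of_forall_exists_equiv blockOffset (blockOffset ∘ finSumFinEquiv.symm)
    fun A hA => ?_).symm
  obtain ⟨j, hj, hjA⟩ : ∃ j ∈ range (k + 1), j ∉ A :=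
    exists_mem_notMem_of_card_lt_card (by rw [card_range]; omega)
  rw [mem_range] at hj
  refine ⟨(swapPrefixes q r j).trans finSumFinEquiv, fun x => ?_, fun x y hx hy => ?_⟩
  · simp [blockOffset_swapPrefixes]
  · exact cycleGraph_adj_swapPrefixes_iff (by omega) (by omega) (by omega) (by omega)
      (ne_of_mem_of_not_mem hx hjA) (ne_of_mem_of_not_mem hy hjA)
end

section
/- For every natural number n ≥ 4 there exist finite simple graphs G and G', each with exactly n vertices and maximum degree at most 2, such that G is connected, G' is disconnected, and G and G' have the same ⌊n/2⌋-deck. Consequently, for n ≥ 4 the least k such that the k-deck of an n-vertex graph always determines whether the graph is connected is at least ⌊n/2⌋ + 1. -/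
open SimpleGraph

/-!
Take `P_n` and the disjoint union `C_m + P_b` with `m + b = n` and `b + 2 ≤ m`, both on the vertices
`0, …, n - 1`, the cycle being `0, …, m - 1`. Say that `q ≤ b` is a gap of a vertex set `s` if `s`
misses both `q` and `m + q`. At a gap `q`, exchanging the blocks `[0, q)` and `[m, m + q)` turns the
subgraph of `P_n` induced by `s` into an induced subgraph of `C_m + P_b`: the edge `{m - 1, m}` of
`P_n` becomes the edge `{m - 1, 0}` of `C_m`, and edges joining the blocks to `q` and `m + q` do not
matter. If `s` has no gap and at most `b + 1` vertices, they are used up by the `b + 1` pairs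
`{q, m + q}`, so `s` misses `m - 1` and both graphs induce the same subgraph on `s`. Exchanging
blocks does not change the set of gaps, so exchanging at the largest gap is an involution on vertex
sets.
-/

theorem nonempty_iso_induce_image {V W : Type*} [DecidableEq W] {G : SimpleGraph V}
    {G' : SimpleGraph W} {f : V → W} (hf : Function.Injective f)
    {s : Finset V} (hadj : ∀ u ∈ s, ∀ v ∈ s, G'.Adj (f u) (f v) ↔ G.Adj u v) :
    Nonempty (G.induce (s : Set V) ≃g G'.induce ((s.image f : Finset W) : Set W)) := by
  rw [Finset.coe_image]
  exact ⟨⟨Equiv.Set.image f s hf, fun {u v} ↦ hadj u u.2 v v.2⟩⟩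

theorem SameDeck.of_image {V W : Type*} [Fintype V] [Fintype W] [DecidableEq W]
    {G : SimpleGraph V} {G' : SimpleGraph W} {k : ℕ} (f : Finset V → V → W)
    (hf : ∀ s, Function.Injective (f s))
    (hbij : Function.Bijective fun s : Finset V ↦ s.image (f s))
    (hadj : ∀ s : Finset V, s.card = k →
      ∀ u ∈ s, ∀ v ∈ s, G'.Adj (f s u) (f s v) ↔ G.Adj u v) :
    SameDeck G G' k := by
  intro H
  have hcard (s : Finset V) : (s.image (f s)).card = s.card :=
    Finset.card_image_of_injective s (hf s)
  refine Set.ncard_congr (fun s _ ↦ s.image (f s)) ?_ (fun s t _ _ hst ↦ hbij.1 hst) ?_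
  · rintro s ⟨hs, ⟨e⟩⟩
    obtain ⟨i⟩ := nonempty_iso_induce_image (hf s) (hadj s hs)
    exact ⟨(hcard s).trans hs, ⟨i.symm.trans e⟩⟩
  · rintro t ⟨ht, ⟨e⟩⟩
    obtain ⟨s, rfl⟩ := hbij.2 t
    have hs : s.card = k := (hcard s).symm.trans ht
    obtain ⟨i⟩ := nonempty_iso_induce_image (hf s) (hadj s hs)
    exact ⟨s, ⟨hs, ⟨i.trans e⟩⟩, rfl⟩

theorem cycleGraph_adj_iff_pathGraph_adj {n : ℕ} (hn : 2 ≤ n) {u v : Fin n} :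
    (cycleGraph n).Adj u v ↔
      (pathGraph n).Adj u v ∨ u.val = 0 ∧ v.val + 1 = n ∨ v.val = 0 ∧ u.val + 1 = n := by
  have hsub (x y : Fin n) : (x - y).val = if y ≤ x then x.val - y.val else n + x.val - y.val := by
    split_ifs with h
    · exact Fin.sub_val_of_le h
    · exact Fin.coe_sub_iff_lt.mpr (not_le.mp h)
  rw [cycleGraph_adj', pathGraph_adj, hsub, hsub]
  split_ifs <;> omega

theorem ncard_neighborSet_cycleGraph_le_two {n : ℕ} (v : Fin n) :
    ((cycleGraph n).neighborSet v).ncard ≤ 2 := by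
  match n with
  | 0 => exact v.elim0
  | 1 => simp [cycleGraph_one_eq_bot]
  | n + 2 =>
    rw [cycleGraph_neighborSet, ← Finset.coe_pair, Set.ncard_coe_finset]
    exact Finset.card_le_two

theorem ncard_neighborSet_pathGraph_le_two {n : ℕ} (v : Fin n) :
    ((pathGraph n).neighborSet v).ncard ≤ 2 :=
  (Set.ncard_le_ncard fun _ h ↦ pathGraph_le_cycleGraph h).trans
    (ncard_neighborSet_cycleGraph_le_two v)

section CyclePath

variable {m b : ℕ}

/-- The disjoint union of a cycle on `m` vertices and a path on `b` vertices, numbered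
consecutively: the cycle is `0, …, m - 1` and the path is `m, …, m + b - 1`. -/
def cyclePathGraph (m b : ℕ) : SimpleGraph (Fin (m + b)) :=
  (cycleGraph m ⊕g pathGraph b).comap finSumFinEquiv.symm

/-- The defining isomorphism of `cyclePathGraph m b` with a disjoint sum of graphs. -/
def cyclePathGraphIso (m b : ℕ) : cyclePathGraph m b ≃g cycleGraph m ⊕g pathGraph b :=
  Iso.comap finSumFinEquiv.symm _

theorem not_connected_cyclePathGraph (hm : 0 < m) (hb : 0 < b) :
    ¬ (cyclePathGraph m b).Connected := by
  have : Nonempty (Fin m) := ⟨⟨0, hm⟩⟩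
  have : Nonempty (Fin b) := ⟨⟨0, hb⟩⟩
  rw [(cyclePathGraphIso m b).connected_iff]
  exact not_connected_sum

theorem ncard_neighborSet_cyclePathGraph_le_two (v : Fin (m + b)) :
    ((cyclePathGraph m b).neighborSet v).ncard ≤ 2 := by
  rw [Set.ncard_congr' ((cyclePathGraphIso m b).mapNeighborSet v)]
  rcases cyclePathGraphIso m b v with w | w
  · rw [neighborSet_sum_inl, Set.ncard_image_of_injective _ Sum.inl_injective]
    exact ncard_neighborSet_cycleGraph_le_two w
  · rw [neighborSet_sum_inr, Set.ncard_image_of_injective _ Sum.inr_injective]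
    exact ncard_neighborSet_pathGraph_le_two w

theorem cyclePathGraph_adj (hm : 2 ≤ m) {u v : Fin (m + b)} :
    (cyclePathGraph m b).Adj u v ↔
      (u.val + 1 = v.val ∧ v.val ≠ m) ∨ (v.val + 1 = u.val ∧ u.val ≠ m) ∨
        (u.val = 0 ∧ v.val + 1 = m) ∨ (v.val = 0 ∧ u.val + 1 = m) := by
  unfold cyclePathGraph
  induction u using Fin.addCases <;> induction v using Fin.addCases <;>
    simp only [comap_adj, finSumFinEquiv_symm_apply_castAdd, finSumFinEquiv_symm_apply_natAdd,
      Fin.val_castAdd, Fin.val_natAdd]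
  case left.left => rw [sum_adj_inl, cycleGraph_adj_iff_pathGraph_adj hm, pathGraph_adj]; omega
  case left.right => exact iff_of_false (not_adj_sum_inl_inr _ _) (by omega)
  case right.left => exact iff_of_false (fun h ↦ not_adj_sum_inl_inr _ _ h.symm) (by omega)
  case right.right => rw [sum_adj_inr, pathGraph_adj]; omega

/-- Exchange the blocks `[0, a)` and `[m, m + a)` of `Fin (m + b)`, where `a ≤ b`. -/
def swapBlocks (a : Fin (b + 1)) (v : Fin (m + b)) : Fin (m + b) :=
  if h : v.val < a.val then ⟨m + v, by omega⟩
  else if m ≤ v.val ∧ v.val < m + a then ⟨v - m, by omega⟩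
  else v

theorem val_swapBlocks (a : Fin (b + 1)) (v : Fin (m + b)) :
    (swapBlocks a v).val =
      if v.val < a.val then m + v.val
      else if m ≤ v.val ∧ v.val < m + a.val then v.val - m
      else v.val := by
  unfold swapBlocks
  split_ifs <;> rfl

theorem swapBlocks_involutive (hbm : b ≤ m) (a : Fin (b + 1)) :
    Function.Involutive (swapBlocks (m := m) a) := by
  intro v
  ext
  rw [val_swapBlocks, val_swapBlocks]
  split_ifs <;> omega

theorem swapBlocks_zero (v : Fin (m + b)) : swapBlocks 0 v = v := by
  ext
  simp only [val_swapBlocks, Fin.val_zero]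
  grind

/-- The gaps of a vertex set `s`: the `q ≤ b` for which `s` misses the vertices `q` and `m + q`.
For `q = b` only the first of these is a vertex. -/
def gaps (s : Finset (Fin (m + b))) : Finset (Fin (b + 1)) :=
  {q | ∀ v ∈ s, v.val ≠ q.val ∧ v.val ≠ m + q.val}

theorem mem_gaps {s : Finset (Fin (m + b))} {q : Fin (b + 1)} :
    q ∈ gaps s ↔ ∀ v ∈ s, v.val ≠ q.val ∧ v.val ≠ m + q.val := by
  simp [gaps]

theorem gaps_image_swapBlocks (hbm : b < m) (a : Fin (b + 1)) (s : Finset (Fin (m + b))) :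
    gaps (s.image (swapBlocks a)) = gaps s := by
  ext q
  simp only [mem_gaps, Finset.forall_mem_image, val_swapBlocks]
  refine forall₂_congr fun v _ ↦ ?_
  split_ifs <;> omega

theorem gaps_nonempty (hbm : b + 2 ≤ m) {s : Finset (Fin (m + b))} (hs : s.card ≤ b + 1)
    {w : Fin (m + b)} (hw : w ∈ s) (hwm : w.val + 1 = m) : (gaps s).Nonempty := by
  by_contra! hgaps
  have hhit (q : Fin (b + 1)) : ∃ v ∈ s, v.val = q.val ∨ v.val = m + q.val := by
    have hq : q ∉ gaps s := hgaps ▸ Finset.notMem_empty q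
    rw [mem_gaps] at hq
    push Not at hq
    grind
  choose f hfs hf using hhit
  have hinj : Function.Injective f := fun p q hpq ↦ by grind [hf p, hf q]
  have hne (q : Fin (b + 1)) : f q ≠ w := by grind [hf q]
  have hmaps : ∀ q ∈ Finset.univ, f q ∈ s.erase w :=
    fun q _ ↦ Finset.mem_erase.mpr ⟨hne q, hfs q⟩
  have hcard := Finset.card_le_card_of_injOn f hmaps hinj.injOn
  rw [Finset.card_univ, Fintype.card_fin, Finset.card_erase_of_mem hw] at hcard
  omega

/-- The largest gap of `s`, the point at which blocks are exchanged; it is `0` if `s` has no gap,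
so that nothing is exchanged then. -/
noncomputable def cutPoint (s : Finset (Fin (m + b))) : Fin (b + 1) :=
  (gaps s).sup id

theorem cutPoint_mem_gaps {s : Finset (Fin (m + b))} (h : (gaps s).Nonempty) :
    cutPoint s ∈ gaps s := by
  obtain ⟨q, hq, hsup⟩ := Finset.exists_mem_eq_sup (gaps s) h id
  rwa [cutPoint, hsup]

theorem involutive_image_swapBlocks_cutPoint (hbm : b < m) :
    Function.Involutive fun s : Finset (Fin (m + b)) ↦ s.image (swapBlocks (cutPoint s)) := by
  intro s
  simp only [cutPoint, gaps_image_swapBlocks hbm, Finset.image_image,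
    (swapBlocks_involutive hbm.le _).comp_self, Finset.image_id]

theorem cyclePathGraph_adj_swapBlocks (hbm : b + 2 ≤ m) {s : Finset (Fin (m + b))}
    {a : Fin (b + 1)} (ha : a ∈ gaps s) {u v : Fin (m + b)} (hu : u ∈ s) (hv : v ∈ s) :
    (cyclePathGraph m b).Adj (swapBlocks a u) (swapBlocks a v) ↔ (pathGraph (m + b)).Adj u v := by
  have hua := mem_gaps.mp ha u hu
  have hva := mem_gaps.mp ha v hv
  rw [cyclePathGraph_adj (by omega), pathGraph_adj, val_swapBlocks, val_swapBlocks]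
  split_ifs <;> omega

theorem cyclePathGraph_adj_iff_pathGraph_adj (hm : 2 ≤ m) {u v : Fin (m + b)}
    (hu : u.val + 1 ≠ m) (hv : v.val + 1 ≠ m) :
    (cyclePathGraph m b).Adj u v ↔ (pathGraph (m + b)).Adj u v := by
  rw [cyclePathGraph_adj hm, pathGraph_adj]
  omega

theorem cyclePathGraph_adj_swapBlocks_cutPoint (hbm : b + 2 ≤ m) {s : Finset (Fin (m + b))}
    (hs : s.card ≤ b + 1) {u v : Fin (m + b)} (hu : u ∈ s) (hv : v ∈ s) :
    (cyclePathGraph m b).Adj (swapBlocks (cutPoint s) u) (swapBlocks (cutPoint s) v) ↔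
      (pathGraph (m + b)).Adj u v := by
  by_cases h : (gaps s).Nonempty
  · exact cyclePathGraph_adj_swapBlocks hbm (cutPoint_mem_gaps h) hu hv
  · have hmiss (w : Fin (m + b)) (hw : w ∈ s) : w.val + 1 ≠ m :=
      fun hwm ↦ h (gaps_nonempty hbm hs hw hwm)
    have hcut : cutPoint s = 0 := by
      rw [cutPoint, Finset.not_nonempty_iff_eq_empty.mp h, Finset.sup_empty, bot_eq_zero]
    rw [hcut, swapBlocks_zero, swapBlocks_zero]
    exact cyclePathGraph_adj_iff_pathGraph_adj (by omega) (hmiss u hu) (hmiss v hv)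

theorem sameDeck_pathGraph_cyclePathGraph {k : ℕ} (hbm : b + 2 ≤ m) (hk : k ≤ b + 1) :
    SameDeck (pathGraph (m + b)) (cyclePathGraph m b) k :=
  SameDeck.of_image (fun s ↦ swapBlocks (cutPoint s))
    (fun s ↦ (swapBlocks_involutive (by omega) (cutPoint s)).injective)
    (involutive_image_swapBlocks_cutPoint (by omega)).bijective
    (fun _ hs _ hu _ hv ↦ cyclePathGraph_adj_swapBlocks_cutPoint hbm (hs.trans_le hk) hu hv)

end CyclePath

/-- For `n ≥ 4` there are `n`-vertex graphs `G` (connected) and `G'`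
(disconnected), both with maximum degree at most 2, having the same `⌊n/2⌋`-deck.
Consequently, any `k` such that the `k`-deck of every `n`-vertex graph determines
connectedness satisfies `k ≥ ⌊n/2⌋ + 1`. -/
theorem stmt_5 (n : ℕ) (hn : 4 ≤ n) :
    (∃ G G' : SimpleGraph (Fin n),
      (∀ v, (G.neighborSet v).ncard ≤ 2) ∧ (∀ v, (G'.neighborSet v).ncard ≤ 2) ∧
      G.Connected ∧ ¬ G'.Connected ∧ SameDeck G G' (n / 2)) ∧
    (∀ k : ℕ,
      (∀ G G' : SimpleGraph (Fin n), SameDeck G G' k → (G.Connected ↔ G'.Connected)) →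
      n / 2 + 1 ≤ k) := by
  obtain ⟨m, b, rfl, hbm, hb, hhalf⟩ :
      ∃ m b, n = m + b ∧ b + 2 ≤ m ∧ 0 < b ∧ n / 2 = b + 1 :=
    ⟨n - (n / 2 - 1), n / 2 - 1, by omega, by omega, by omega, by omega⟩
  have hpath : (pathGraph (m + b)).Connected :=
    have : Nonempty (Fin (m + b)) := ⟨⟨0, by omega⟩⟩
    ⟨pathGraph_preconnected (m + b)⟩
  have hsum : ¬ (cyclePathGraph m b).Connected := not_connected_cyclePathGraph (by omega) hb
  refine ⟨⟨pathGraph (m + b), cyclePathGraph m b, ncard_neighborSet_pathGraph_le_two,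
    ncard_neighborSet_cyclePathGraph_le_two, hpath, hsum,
    sameDeck_pathGraph_cyclePathGraph hbm hhalf.le⟩, fun k hk ↦ ?_⟩
  by_contra! hlt
  have hdeck := sameDeck_pathGraph_cyclePathGraph hbm (k := k) (by omega)
  exact hsum ((hk _ _ hdeck).mp hpath)
end

section
/- Let L be a linear forest with k vertices, and let P_n be the path with vertices w_1, …, w_n in path order. For a vertex w_h, let s'(h) denote the number of k-element vertex subsets S of P_n with w_h ∈ S such that the subgraph of P_n induced by S is isomorphic to L and w_h has no neighbor in S (i.e., w_h is an isolated vertex of the induced subgraph). Then for all h and h' with k ≤ h ≤ n−k+1 and k ≤ h' ≤ n−k+1, we have s'(h) = s'(h'). -/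
open SimpleGraph

/-!
Number the vertices of the path from `0` and let `a ≤ b` be the two positions to be compared.
Among the `k + 1` distances `0, …, k` to the interval `[a, b]`, a `k`-set `S` misses at least one;
let `r ≤ k` be the least one missed. Reversing the window of vertices at distance less than `r`
from `[a, b]` changes neither the adjacencies inside `S`, since no vertex of `S` lies just outside
the window, nor the distances to `[a, b]`, so it is an involution on `k`-sets. It sends `a` to `b`
and preserves the isomorphism type of the induced subgraph rooted there. The bounds on the
positions say exactly that the window stays inside the path.
-/

/-- The isomorphism between the subgraphs induced by a set and by its image under a permutation
which preserves adjacency on that set, though possibly not on the whole graph. -/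
def induceMapIso {V : Type*} {G : SimpleGraph V} (σ : Equiv.Perm V) {S : Finset V}
    (hσ : ∀ x ∈ S, ∀ y ∈ S, (G.Adj (σ x) (σ y) ↔ G.Adj x y)) :
    G.induce (S : Set V) ≃g G.induce (S.map σ.toEmbedding : Set V) where
  toEquiv := σ.subtypeEquiv fun x => by simp
  map_rel_iff' {x y} := hσ x x.2 y y.2

section Reflection

variable {n : ℕ} (a b : Fin n)

/-- The distance from `x` to the interval `[a, b]` in the path on `n` vertices, for `a ≤ b`: of the
two truncated differences at most one is nonzero. -/
def distIcc (x : Fin n) : ℕ := ((a : ℕ) - x) + ((x : ℕ) - b)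

lemma distIcc_eq_zero {x : Fin n} : distIcc a b x = 0 ↔ a ≤ x ∧ x ≤ b := by
  simp only [distIcc, Fin.le_def]
  lia

/-- The reversal of the window `(a - r, b + r)` of vertices at distance less than `r` from `[a, b]`,
fixing all other vertices. It is set to be the identity when the window is not contained in the
path. -/
def windowReversal (r : ℕ) (x : Fin n) : Fin n :=
  if h : distIcc a b x < r ∧ r ≤ a + 1 ∧ b + r ≤ n then
    ⟨a + b - x, by simp only [distIcc] at h; lia⟩
  else x

lemma val_windowReversal (r : ℕ) (x : Fin n) :
    (windowReversal a b r x : ℕ) =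
      if distIcc a b x < r ∧ r ≤ a + 1 ∧ b + r ≤ n then (a : ℕ) + b - x else x := by
  unfold windowReversal
  split_ifs <;> rfl

lemma distIcc_windowReversal (r : ℕ) (x : Fin n) :
    distIcc a b (windowReversal a b r x) = distIcc a b x := by
  unfold windowReversal
  split_ifs with hx
  · simp only [distIcc] at hx ⊢
    lia
  · rfl

lemma windowReversal_involutive (r : ℕ) : Function.Involutive (windowReversal a b r) := by
  intro x
  ext
  simp only [val_windowReversal, distIcc_windowReversal]
  split_ifs with hx
  · simp only [distIcc] at hx
    lia
  · rfl

variable {a b} in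
lemma windowReversal_left (hab : a ≤ b) {r : ℕ} (hr : 0 < r) (ha : r ≤ a + 1) (hb : b + r ≤ n) :
    windowReversal a b r a = b := by
  have ha_dist : distIcc a b a = 0 := (distIcc_eq_zero a b).2 ⟨le_rfl, hab⟩
  ext
  rw [val_windowReversal, if_pos ⟨ha_dist ▸ hr, ha, hb⟩, Nat.add_sub_cancel_left]

variable {a b} in
lemma distIcc_lt_iff_of_adj {r : ℕ} {x y : Fin n} (hx : distIcc a b x ≠ r)
    (hy : distIcc a b y ≠ r) (hxy : (pathGraph n).Adj x y) :
    distIcc a b x < r ↔ distIcc a b y < r := by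
  simp only [pathGraph_adj, distIcc] at *
  lia

variable {a b} in
lemma pathGraph_adj_windowReversal_iff {r : ℕ} {x y : Fin n} (hx : distIcc a b x ≠ r)
    (hy : distIcc a b y ≠ r) :
    (pathGraph n).Adj (windowReversal a b r x) (windowReversal a b r y) ↔
      (pathGraph n).Adj x y := by
  by_cases hside : distIcc a b x < r ↔ distIcc a b y < r
  · simp only [pathGraph_adj, val_windowReversal, hside]
    split_ifs with hy_window
    · have hx_window := hside.2 hy_window.1
      simp only [distIcc] at hx_window hy_window
      lia
    · rfl
  · refine iff_of_false (fun hadj => hside ?_)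
      fun hadj => hside (distIcc_lt_iff_of_adj hx hy hadj)
    rw [← distIcc_windowReversal a b r x] at hx
    rw [← distIcc_windowReversal a b r y] at hy
    simpa only [distIcc_windowReversal] using distIcc_lt_iff_of_adj hx hy hadj

/-- The least distance to `[a, b]` which is not attained on `S`. -/
noncomputable def gapRadius (S : Finset (Fin n)) : ℕ := sInf {r | ∀ x ∈ S, distIcc a b x ≠ r}

lemma exists_gap_le_card (S : Finset (Fin n)) : ∃ r ≤ S.card, ∀ x ∈ S, distIcc a b x ≠ r := by
  have hcard : (S.image (distIcc a b)).card < (Finset.range (S.card + 1)).card := by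
    simpa [Nat.lt_succ_iff] using Finset.card_image_le
  obtain ⟨r, hr, hrS⟩ := Finset.exists_mem_notMem_of_card_lt_card hcard
  exact ⟨r, by simpa [Nat.lt_succ_iff] using hr, by simpa using hrS⟩

lemma gapRadius_le_card (S : Finset (Fin n)) : gapRadius a b S ≤ S.card :=
  let ⟨_, hr, hrS⟩ := exists_gap_le_card a b S
  (Nat.sInf_le (Set.mem_ofPred.2 hrS)).trans hr

variable {a b} in
lemma distIcc_ne_gapRadius {S : Finset (Fin n)} {x : Fin n} (hx : x ∈ S) :
    distIcc a b x ≠ gapRadius a b S :=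
  let ⟨r, _, hrS⟩ := exists_gap_le_card a b S
  Nat.sInf_mem (s := {r | ∀ x ∈ S, distIcc a b x ≠ r}) ⟨r, hrS⟩ x hx

variable {a b} in
lemma gapRadius_pos {S : Finset (Fin n)} {x : Fin n} (hx : x ∈ S) (hax : a ≤ x) (hxb : x ≤ b) :
    0 < gapRadius a b S :=
  Nat.pos_of_ne_zero fun hr =>
    distIcc_ne_gapRadius hx (((distIcc_eq_zero a b).2 ⟨hax, hxb⟩).trans hr.symm)

/-- The permutation of the path which reverses, for a given set `S`, the largest window around
`[a, b]` attaining every distance on `S`. -/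
noncomputable def gapReversal (S : Finset (Fin n)) : Equiv.Perm (Fin n) :=
  (windowReversal_involutive a b (gapRadius a b S)).toPerm

/-- The image of a vertex set under its own `gapReversal`: the involution on vertex sets which
exchanges the roles of `a` and `b`. -/
noncomputable def reverseWindow (S : Finset (Fin n)) : Finset (Fin n) :=
  S.map (gapReversal a b S).toEmbedding

lemma card_reverseWindow (S : Finset (Fin n)) : (reverseWindow a b S).card = S.card :=
  S.card_map _

lemma gapRadius_reverseWindow (S : Finset (Fin n)) :
    gapRadius a b (reverseWindow a b S) = gapRadius a b S := by
  simp only [gapRadius, reverseWindow, gapReversal, Finset.forall_mem_map, Equiv.coe_toEmbedding,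
    Function.Involutive.coe_toPerm, distIcc_windowReversal]

lemma reverseWindow_involutive : Function.Involutive (reverseWindow a b) := by
  intro S
  have hperm : gapReversal a b (reverseWindow a b S) = gapReversal a b S := by
    simp only [gapReversal, gapRadius_reverseWindow]
  ext x
  rw [reverseWindow, hperm, reverseWindow]
  simp [gapReversal, windowReversal_involutive a b _ _]

variable {a b}

lemma pathGraph_adj_gapReversal_iff {S : Finset (Fin n)} {x y : Fin n} (hx : x ∈ S) (hy : y ∈ S) :
    (pathGraph n).Adj (gapReversal a b S x) (gapReversal a b S y) ↔ (pathGraph n).Adj x y :=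
  pathGraph_adj_windowReversal_iff (distIcc_ne_gapRadius hx) (distIcc_ne_gapRadius hy)

lemma nonempty_induce_reverseWindow_iso_iff {W : Type*} {L : SimpleGraph W} {S : Finset (Fin n)} :
    Nonempty ((pathGraph n).induce (reverseWindow a b S : Set (Fin n)) ≃g L) ↔
      Nonempty ((pathGraph n).induce (S : Set (Fin n)) ≃g L) :=
  let φ := induceMapIso (gapReversal a b S) fun _ hx _ hy => pathGraph_adj_gapReversal_iff hx hy
  ⟨fun ⟨ψ⟩ => ⟨φ.trans ψ⟩, fun ⟨ψ⟩ => ⟨φ.symm.trans ψ⟩⟩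

lemma gapReversal_left (hab : a ≤ b) {S : Finset (Fin n)} (ha : S.card ≤ a + 1)
    (hb : b + S.card ≤ n) (hS : 0 < gapRadius a b S) : gapReversal a b S a = b := by
  have hr := gapRadius_le_card a b S
  exact windowReversal_left hab hS (by lia) (by lia)

lemma mem_reverseWindow_iff (hab : a ≤ b) {S : Finset (Fin n)} (ha : S.card ≤ a + 1)
    (hb : b + S.card ≤ n) : b ∈ reverseWindow a b S ↔ a ∈ S := by
  have hmem (hS : 0 < gapRadius a b S) : b ∈ reverseWindow a b S ↔ a ∈ S := by
    have himage := Finset.mem_map' (a := a) (s := S) (gapReversal a b S).toEmbedding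
    rwa [Equiv.coe_toEmbedding, gapReversal_left hab ha hb hS] at himage
  refine ⟨fun hbS => (hmem ?_).1 hbS, fun haS => (hmem ?_).2 haS⟩
  · exact gapRadius_reverseWindow a b S ▸ gapRadius_pos hbS hab le_rfl
  · exact gapRadius_pos haS le_rfl hab

lemma forall_mem_reverseWindow_not_adj_iff (hab : a ≤ b) {S : Finset (Fin n)}
    (ha : S.card ≤ a + 1) (hb : b + S.card ≤ n) (haS : a ∈ S) :
    (∀ u ∈ reverseWindow a b S, ¬ (pathGraph n).Adj b u) ↔ ∀ u ∈ S, ¬ (pathGraph n).Adj a u := by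
  have hleft : gapReversal a b S a = b := gapReversal_left hab ha hb (gapRadius_pos haS le_rfl hab)
  rw [reverseWindow, Finset.forall_mem_map]
  refine forall₂_congr fun u hu => not_congr ?_
  rw [← pathGraph_adj_gapReversal_iff haS hu, hleft, Equiv.coe_toEmbedding]

end Reflection

theorem stmt_9_general {W : Type*} (L : SimpleGraph W) {k n : ℕ} {a b : Fin n}
    (hka : k ≤ a + 1) (han : a + k ≤ n) (hkb : k ≤ b + 1) (hbn : b + k ≤ n) :
    Set.ncard {s : Finset (Fin n) | s.card = k ∧ a ∈ s ∧ (∀ u ∈ s, ¬ (pathGraph n).Adj a u) ∧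
      Nonempty ((pathGraph n).induce (s : Set (Fin n)) ≃g L)} =
    Set.ncard {s : Finset (Fin n) | s.card = k ∧ b ∈ s ∧ (∀ u ∈ s, ¬ (pathGraph n).Adj b u) ∧
      Nonempty ((pathGraph n).induce (s : Set (Fin n)) ≃g L)} := by
  wlog hab : a ≤ b generalizing a b
  · exact (this hkb hbn hka han (le_of_not_ge hab)).symm
  have hrev := reverseWindow_involutive a b
  symm
  rw [← Set.ncard_preimage_of_injective_subset_range hrev.injective
    (hrev.surjective.range_eq ▸ Set.subset_univ _)]
  congr 1
  ext s
  rw [Set.mem_preimage, Set.mem_ofPred, Set.mem_ofPred, card_reverseWindow,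
    nonempty_induce_reverseWindow_iso_iff]
  refine and_congr_right fun hs => ?_
  subst hs
  rw [mem_reverseWindow_iff hab hka hbn]
  refine and_congr_right fun has => ?_
  rw [forall_mem_reverseWindow_not_adj_iff hab hka hbn has]

/-- For a linear forest `L` with `k` vertices and the path `P_n` with
vertices `w_1, …, w_n` in order (here `w_h` is the vertex of `Fin n` with index `h-1`),
the number `s'(h)` of `k`-element vertex subsets `S` containing `w_h`, inducing a
subgraph isomorphic to `L`, and in which `w_h` has no neighbor, is the same for all
`h` with `k ≤ h ≤ n - k + 1`. -/
theorem stmt_9 (k n : ℕ) (L : SimpleGraph (Fin k)) (hL : IsLinearForest L)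
    (h h' : ℕ) (hh1 : 1 ≤ h) (hhn : h ≤ n) (hh'1 : 1 ≤ h') (hh'n : h' ≤ n)
    (hkh : k ≤ h) (hhk : h ≤ n - k + 1) (hkh' : k ≤ h') (hh'k : h' ≤ n - k + 1) :
    Set.ncard {s : Finset (Fin n) | s.card = k ∧ (⟨h - 1, by omega⟩ : Fin n) ∈ s ∧
      (∀ u ∈ s, ¬ (pathGraph n).Adj ⟨h - 1, by omega⟩ u) ∧
      Nonempty (((pathGraph n).induce (↑s : Set (Fin n))) ≃g L)} =
    Set.ncard {s : Finset (Fin n) | s.card = k ∧ (⟨h' - 1, by omega⟩ : Fin n) ∈ s ∧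
      (∀ u ∈ s, ¬ (pathGraph n).Adj ⟨h' - 1, by omega⟩ u) ∧
      Nonempty (((pathGraph n).induce (↑s : Set (Fin n))) ≃g L)} := by
  exact stmt_9_general L (by lia) (by lia) (by lia) (by lia)
end
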